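/- Let (R, m) be a commutative Noetherian local integral domain of Krull dimension n that is not catenary. Then there exists a prime ideal p of R such that cd(p) ≠ ht(p); in particular, p is not a set-theoretic complete intersection ideal. -/

import Mathlib

universe u

open CategoryTheory

/-- The cohomological dimension of `M` with respect to `I`:
`cd(I,M) = sup { i ∈ ℕ | H^i_I(M) ≠ 0 }`, as an element of `ℕ∞`. -/
noncomputable def cohomologicalDimension {R : Type u} [CommRing R] (I : Ideal R)
    (M : ModuleCat.{u} R) : ℕ∞ :=
  sSup {c : ℕ∞ | ∃ i : ℕ, c = i ∧ Nontrivial ((localCohomology I i).obj M)}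

/-- The height of an ideal: the infimum of the heights of the prime ideals containing it. -/
noncomputable def idealHeight {R : Type u} [CommRing R] (I : Ideal R) : ℕ∞ :=
  ⨅ (p : PrimeSpectrum R) (_ : I ≤ p.asIdeal), Order.height p

section

open Limits Opposite

variable {R : Type u} [CommRing R]

theorem unop_homologyι_surjective (L : ChainComplex (ModuleCat.{u} R)ᵒᵖ ℕ) (n : ℕ) :
    Function.Surjective (L.homologyι n).unop :=
  (ModuleCat.epi_iff_surjective _).1 inferInstance

theorem unop_pOpcycles_injective (L : ChainComplex (ModuleCat.{u} R)ᵒᵖ ℕ) (n : ℕ) :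
    Function.Injective (L.pOpcycles n).unop :=
  (ModuleCat.mono_iff_injective _).1 inferInstance

theorem unop_homologyι_eq_zero_iff (L : ChainComplex (ModuleCat.{u} R)ᵒᵖ ℕ) (n : ℕ)
    (z : (L.opcycles (n + 1)).unop) :
    (L.homologyι (n + 1)).unop z = 0 ↔
      ∃ w : (L.X n).unop, (L.fromOpcycles (n + 1) n).unop w = z := by
  have h := (ShortComplex.exact_of_f_is_kernel
    (ShortComplex.mk _ _ (L.homologyι_comp_fromOpcycles (n + 1) n))
    (L.homologyIsKernel (n + 1) n (by simp))).unop
  refine ⟨fun hz ↦ (ShortComplex.moduleCat_exact_iff _).1 h z hz, ?_⟩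
  rintro ⟨w, rfl⟩
  exact ShortComplex.moduleCat_zero_apply
    (ShortComplex.mk _ _ (L.homologyι_comp_fromOpcycles (n + 1) n)).unop w

theorem exists_unop_pOpcycles_eq (L : ChainComplex (ModuleCat.{u} R)ᵒᵖ ℕ) (n : ℕ)
    (f : (L.X n).unop) (hf : (L.d (n + 1) n).unop f = 0) :
    ∃ z, (L.pOpcycles n).unop z = f := by
  have h := (ShortComplex.exact_of_g_is_cokernel
    (ShortComplex.mk _ _ (L.d_pOpcycles (n + 1) n))
    (L.opcyclesIsCokernel (n + 1) n (by simp))).unop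
  exact (ShortComplex.moduleCat_exact_iff _).1 h f hf

/-- The element `e` of `Ext^n(X, Y)` is the class of the cocycle `f : Pₙ ⟶ Y`. -/
def IsExtRep {X : ModuleCat.{u} R} (P : ProjectiveResolution X) {Y : ModuleCat.{u} R} {n : ℕ}
    (f : P.complex.X n ⟶ Y) (e : ((Ext R (ModuleCat.{u} R) n).obj (op X)).obj Y) : Prop :=
  let F := ((linearYoneda R (ModuleCat.{u} R)).obj Y).rightOp
  let L := (F.mapHomologicalComplex (ComplexShape.down ℕ)).obj P.complex
  ∃ z : (L.opcycles n).unop, (L.pOpcycles n).unop z = f ∧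
    (P.isoLeftDerivedObj F n).hom.unop ((L.homologyι n).unop z) = e

variable {X X' Y : ModuleCat.{u} R} {P : ProjectiveResolution X} {P' : ProjectiveResolution X'}

theorem IsExtRep.exists_cocycle (P : ProjectiveResolution X) {n : ℕ}
    (e : ((Ext R (ModuleCat.{u} R) n).obj (op X)).obj Y) :
    ∃ f : P.complex.X n ⟶ Y, P.complex.d (n + 1) n ≫ f = 0 ∧ IsExtRep P f e := by
  let F := ((linearYoneda R (ModuleCat.{u} R)).obj Y).rightOp
  let L := (F.mapHomologicalComplex (ComplexShape.down ℕ)).obj P.complex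
  obtain ⟨y, rfl⟩ := (ModuleCat.epi_iff_surjective (P.isoLeftDerivedObj F n).hom.unop).1
    inferInstance e
  obtain ⟨z, rfl⟩ := unop_homologyι_surjective L n y
  refine ⟨(L.pOpcycles n).unop z, ?_, z, rfl, rfl⟩
  exact ShortComplex.moduleCat_zero_apply
    (ShortComplex.mk _ _ (L.d_pOpcycles (n + 1) n)).unop z

theorem IsExtRep.exists_class {n : ℕ} (f : P.complex.X n ⟶ Y)
    (hf : P.complex.d (n + 1) n ≫ f = 0) :
    ∃ e, IsExtRep P f e := by
  let F := ((linearYoneda R (ModuleCat.{u} R)).obj Y).rightOp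
  let L := (F.mapHomologicalComplex (ComplexShape.down ℕ)).obj P.complex
  obtain ⟨z, hz⟩ := exists_unop_pOpcycles_eq L n f hf
  exact ⟨_, z, hz, rfl⟩

theorem IsExtRep.eq_zero_iff {n : ℕ} {f : P.complex.X (n + 1) ⟶ Y}
    {e : ((Ext R (ModuleCat.{u} R) (n + 1)).obj (op X)).obj Y} (h : IsExtRep P f e) :
    e = 0 ↔ ∃ g : P.complex.X n ⟶ Y, P.complex.d (n + 1) n ≫ g = f := by
  let F := ((linearYoneda R (ModuleCat.{u} R)).obj Y).rightOp
  let L := (F.mapHomologicalComplex (ComplexShape.down ℕ)).obj P.complex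
  obtain ⟨z, rfl, rfl⟩ := h
  have hinj := (ModuleCat.mono_iff_injective (P.isoLeftDerivedObj F (n + 1)).hom.unop).1
    inferInstance
  refine ((map_eq_zero_iff _ hinj).trans (unop_homologyι_eq_zero_iff L n z)).trans ?_
  refine exists_congr fun w ↦ ?_
  have hd : (L.pOpcycles (n + 1)).unop ((L.fromOpcycles (n + 1) n).unop w) =
      (L.d (n + 1) n).unop w := by
    rw [← L.p_fromOpcycles]; rfl
  rw [← (unop_pOpcycles_injective L (n + 1)).eq_iff, hd]
  rfl

theorem IsExtRep.map {n : ℕ} {f : P.complex.X n ⟶ Y}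
    {e : ((Ext R (ModuleCat.{u} R) n).obj (op X)).obj Y} (h : IsExtRep P f e)
    {g : X' ⟶ X} (φ : ProjectiveResolution.Hom P' P g) :
    IsExtRep P' (φ.hom.f n ≫ f) (((Ext R (ModuleCat.{u} R) n).map g.op).app Y e) := by
  let F := ((linearYoneda R (ModuleCat.{u} R)).obj Y).rightOp
  let L := (F.mapHomologicalComplex (ComplexShape.down ℕ)).obj P.complex
  let L' := (F.mapHomologicalComplex (ComplexShape.down ℕ)).obj P'.complex
  let ψ : L' ⟶ L := (F.mapHomologicalComplex (ComplexShape.down ℕ)).map φ.hom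
  obtain ⟨z, rfl, rfl⟩ := h
  refine ⟨(HomologicalComplex.opcyclesMap ψ n).unop z, ?_, ?_⟩
  · exact ConcreteCategory.congr_hom
      (congrArg Quiver.Hom.unop (HomologicalComplex.p_opcyclesMap ψ n)) z
  · have h₁ := P'.isoLeftDerivedObj_hom_naturality g P φ.hom φ.hom_f_zero_comp_π_f_zero F n
    have h₂ := HomologicalComplex.homologyι_naturality ψ n
    exact ((ConcreteCategory.congr_hom (congrArg Quiver.Hom.unop h₁) _).trans
      (congrArg (P'.isoLeftDerivedObj F n).hom.unop
        (ConcreteCategory.congr_hom (congrArg Quiver.Hom.unop h₂) z))).symm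

theorem ext_restriction_iff {n : ℕ} {f : P.complex.X (n + 1) ⟶ Y}
    (hf : P.complex.d (n + 1 + 1) (n + 1) ≫ f = 0)
    {e : ((_root_.Ext R (ModuleCat.{u} R) (n + 1)).obj (op X)).obj Y} (h : IsExtRep P f e)
    (g : X' ⟶ X) :
    ((_root_.Ext R (ModuleCat.{u} R) (n + 1)).map g.op).app Y e = 0 ↔
      (Abelian.Ext.mk₀ g).comp (P.extMk f _ rfl hf) (zero_add _) = 0 := by
  let P' := projectiveResolution X'
  let φ : ProjectiveResolution.Hom P' P g := ⟨ProjectiveResolution.lift g P' P, by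
    rw [← HomologicalComplex.comp_f, ProjectiveResolution.lift_commutes,
      HomologicalComplex.comp_f]⟩
  rw [(h.map φ).eq_zero_iff, P.mk₀_comp_extMk f _ rfl hf φ,
    ProjectiveResolution.extMk_eq_zero_iff _ _ _ rfl _ _ rfl]

end

section

open Limits Opposite Abelian

variable {R : Type u} [CommRing R]

/-- The projection `R ⧸ I ⟶ R ⧸ J` for `I ≤ J`, as a morphism of `R`-modules. -/
def quotientProj {I J : Ideal R} (h : I ≤ J) :
    ModuleCat.of R (R ⧸ I) ⟶ ModuleCat.of R (R ⧸ J) :=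
  ModuleCat.ofHom (Submodule.mapQ _ _ LinearMap.id h)

theorem quotientProj_comp {I J K : Ideal R} (h : I ≤ J) (h' : J ≤ K) :
    quotientProj h ≫ quotientProj h' = quotientProj (h.trans h') := by
  apply ModuleCat.hom_ext
  apply Submodule.linearMap_qext
  rfl

/-- The local cohomology module is a filtered colimit, so it vanishes exactly when every class in
`Ext^(i+1)(R ⧸ I ^ t, M)` dies after restriction to a higher power of `I`. -/
theorem subsingleton_localCohomology_iff (I : Ideal R) (i : ℕ) (M : ModuleCat.{u} R) :
    Subsingleton ((localCohomology I (i + 1)).obj M) ↔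
      ∀ (t : ℕ) (e : Abelian.Ext (ModuleCat.of R (R ⧸ I ^ t)) M (i + 1)),
        ∃ (s : ℕ) (h : t ≤ s),
          (Ext.mk₀ (quotientProj (Ideal.pow_le_pow_right (I := I) h))).comp e (zero_add _) = 0 := by
  let D := localCohomology.diagram (localCohomology.idealPowersDiagram I) (i + 1)
  have := localCohomology.hasColimitDiagram.{u, 0} (localCohomology.idealPowersDiagram I) (i + 1)
  let ev := (evaluation (ModuleCat.{u} R) (ModuleCat.{u} R)).obj M
  let hc : IsColimit (ev.mapCocone (colimit.cocone D)) :=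
    isColimitOfPreserves ev (colimit.isColimit D)
  have hpt : (localCohomology I (i + 1)).obj M = (ev.mapCocone (colimit.cocone D)).pt := rfl
  rw [hpt]
  have : PreservesFilteredColimitsOfSize.{0, 0} (forget (ModuleCat.{u} R)) :=
    preservesFilteredColimitsOfSize_shrink.{0, u, 0, u} _
  have : PreservesColimitsOfShape (ℕᵒᵖᵒᵖ) (forget (ModuleCat.{u} R)) :=
    PreservesFilteredColimitsOfSize.preserves_filtered_colimits _
  constructor
  · intro hs t e
    obtain ⟨f, hf, rfl⟩ := (projectiveResolution (ModuleCat.of R (R ⧸ I ^ t))).extMk_surjective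
      e _ rfl
    obtain ⟨e', he'⟩ := IsExtRep.exists_class f hf
    have h0 : (ev.mapCocone (colimit.cocone D)).ι.app (op (op t)) e' =
      (ev.mapCocone (colimit.cocone D)).ι.app (op (op t)) 0 := hs.elim _ _
    obtain ⟨k, a, b, hab⟩ := (Concrete.isColimit_rep_eq_iff_exists _ hc _ _).1 h0
    rw [map_zero] at hab
    exact ⟨k.unop.unop, leOfHom a.unop.unop, (ext_restriction_iff hf he' _).1 hab⟩
  · intro H
    refine subsingleton_of_forall_eq 0 fun x ↦ ?_
    obtain ⟨j, e', rfl⟩ := Concrete.isColimit_exists_rep _ hc x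
    obtain ⟨f, hf, he'⟩ := IsExtRep.exists_cocycle (projectiveResolution _) e'
    obtain ⟨s, hs, h0⟩ := H j.unop.unop (ProjectiveResolution.extMk _ f _ rfl hf)
    have h1 := (ext_restriction_iff hf he' _).2 h0
    rw [← map_zero ((ev.mapCocone (colimit.cocone D)).ι.app j).hom]
    refine (Concrete.isColimit_rep_eq_iff_exists _ hc _ _).2
      ⟨op (op s), (homOfLE hs).op.op, (homOfLE hs).op.op, ?_⟩
    rw [map_zero]
    exact h1

theorem exists_forall_restriction_eq_zero {I : Ideal R} {i : ℕ} {M : ModuleCat.{u} R}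
    (hI : Subsingleton ((localCohomology I (i + 1)).obj M)) {K : Ideal R} {t : ℕ}
    (hK : I ^ t ≤ K) (e : Abelian.Ext (ModuleCat.of R (R ⧸ K)) M (i + 1)) :
    ∃ s, ∀ (L : Ideal R) (hL : L ≤ K), L ≤ I ^ s →
      (Ext.mk₀ (quotientProj hL)).comp e (zero_add _) = 0 := by
  obtain ⟨s, hs, h0⟩ := (subsingleton_localCohomology_iff I i M).1 hI t
    ((Ext.mk₀ (quotientProj hK)).comp e (zero_add _))
  refine ⟨s, fun L hL hLs ↦ ?_⟩
  rw [Ext.mk₀_comp_mk₀_assoc, quotientProj_comp] at h0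
  rw [← quotientProj_comp hLs ((Ideal.pow_le_pow_right hs).trans hK), ← Ext.mk₀_comp_mk₀_assoc,
    h0, Ext.comp_zero]

/-- The sequence `R ⧸ (J : y) ⟶ R ⧸ J ⟶ R ⧸ (J + (y))` whose first map is multiplication
by `y`. -/
def colonShortComplex (J : Ideal R) (y : R) : ShortComplex (ModuleCat.{u} R) where
  X₁ := ModuleCat.of R (R ⧸ (Submodule.comap (LinearMap.mulLeft R y) J : Ideal R))
  X₂ := ModuleCat.of R (R ⧸ J)
  X₃ := ModuleCat.of R (R ⧸ (J ⊔ Ideal.span {y}))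
  f := ModuleCat.ofHom (Submodule.mapQ _ _ (LinearMap.mulLeft R y) le_rfl)
  g := quotientProj le_sup_left
  zero := by
    apply ModuleCat.hom_ext
    apply Submodule.linearMap_qext
    ext
    refine (Submodule.Quotient.mk_eq_zero _).2 ?_
    exact Ideal.mem_sup_right (Ideal.mul_mem_right _ _ (Ideal.mem_span_singleton_self y))

theorem colonShortComplex_shortExact (J : Ideal R) (y : R) :
    (colonShortComplex J y).ShortExact := by
  apply ModuleCat.shortComplex_shortExact
  · intro b
    refine ⟨fun hb ↦ ?_, ?_⟩
    · obtain ⟨b, rfl⟩ := Submodule.Quotient.mk_surjective _ b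
      have hb' : b ∈ J ⊔ Ideal.span {y} := (Submodule.Quotient.mk_eq_zero _).1 hb
      obtain ⟨j, hj, z, hz, rfl⟩ := Submodule.mem_sup.1 hb'
      obtain ⟨a, rfl⟩ := Ideal.mem_span_singleton'.1 hz
      refine ⟨Submodule.Quotient.mk a, (Submodule.Quotient.eq _).2 ?_⟩
      have : y * a - (j + a * y) = -j := by ring
      change y * a - (j + a * y) ∈ J
      rw [this]
      exact J.neg_mem hj
    · rintro ⟨a, rfl⟩
      exact ShortComplex.moduleCat_zero_apply (colonShortComplex J y) a
  · rw [injective_iff_map_eq_zero]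
    intro a ha
    obtain ⟨a, rfl⟩ := Submodule.Quotient.mk_surjective _ a
    exact (Submodule.Quotient.mk_eq_zero _).2 ((Submodule.Quotient.mk_eq_zero J).1 ha)
  · intro b
    obtain ⟨b, rfl⟩ := Submodule.Quotient.mk_surjective _ b
    exact ⟨Submodule.Quotient.mk b, rfl⟩

/-- Functoriality of `colonShortComplex` in the ideal. -/
def colonShortComplexMap {J' J : Ideal R} (h : J' ≤ J) (y : R) :
    colonShortComplex J' y ⟶ colonShortComplex J y where
  τ₁ := quotientProj (Submodule.comap_mono h)
  τ₂ := quotientProj h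
  τ₃ := quotientProj (sup_le_sup_right h _)
  comm₁₂ := by
    apply ModuleCat.hom_ext
    apply Submodule.linearMap_qext
    rfl
  comm₂₃ := by
    apply ModuleCat.hom_ext
    apply Submodule.linearMap_qext
    rfl

theorem exists_comap_mulLeft_pow_le [IsDomain R] [IsNoetherianRing R] (I : Ideal R) {y : R}
    (hy : y ≠ 0) (s : ℕ) :
    ∃ k, ∀ n ≥ k, Submodule.comap (LinearMap.mulLeft R y) (I ^ n) ≤ I ^ s := by
  obtain ⟨k, hk⟩ := Ideal.exists_pow_inf_eq_pow_smul I (Ideal.span {y})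
  refine ⟨k + s, fun n hn a ha ↦ ?_⟩
  have h1 : y * a ∈ I ^ (n - k) • (I ^ k • (⊤ : Ideal R) ⊓ Ideal.span {y}) := by
    rw [← hk n (by lia)]
    refine ⟨?_, Ideal.mul_mem_right _ _ (Ideal.mem_span_singleton_self y)⟩
    simpa using ha
  have h2 : y * a ∈ I ^ s * Ideal.span {y} :=
    Ideal.mul_mono (Ideal.pow_le_pow_right (by lia)) inf_le_right h1
  obtain ⟨b, hb, hba⟩ := Ideal.mem_mul_span_singleton.1 h2
  rw [mul_comm] at hba
  rwa [← mul_left_cancel₀ hy hba]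

theorem subsingleton_localCohomology_sup_span_singleton [IsDomain R] [IsNoetherianRing R]
    {I : Ideal R} (x : R) {i : ℕ} {M : ModuleCat.{u} R}
    (h₁ : Subsingleton ((localCohomology I (i + 1)).obj M))
    (h₂ : Subsingleton ((localCohomology I (i + 2)).obj M)) :
    Subsingleton ((localCohomology (I ⊔ Ideal.span {x}) (i + 2)).obj M) := by
  rcases eq_or_ne x 0 with rfl | hx
  · simpa using h₂
  refine (subsingleton_localCohomology_iff _ (i + 1) M).2 fun t e ↦ ?_
  let y := x ^ t
  have hspan : Ideal.span {y} ≤ (I ⊔ Ideal.span {x}) ^ t := by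
    rw [← Ideal.span_singleton_pow]
    exact Ideal.pow_right_mono le_sup_right t
  have hpow (n : ℕ) (hn : t ≤ n) : I ^ n ≤ (I ⊔ Ideal.span {x}) ^ t :=
    (Ideal.pow_le_pow_right hn).trans (Ideal.pow_right_mono le_sup_left t)
  -- The restriction of `e` to `R ⧸ (I ^ n + (y))` comes from a class `f` on `R ⧸ (I ^ n : y)`.
  obtain ⟨s, hs⟩ := exists_forall_restriction_eq_zero h₂ (hpow t le_rfl) e
  let n := max s t
  have hn : I ^ n ⊔ Ideal.span {y} ≤ (I ⊔ Ideal.span {x}) ^ t :=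
    sup_le (hpow n (le_max_right _ _)) hspan
  obtain ⟨f, hf⟩ := Ext.contravariant_sequence_exact₃ (colonShortComplex_shortExact (I ^ n) y) M
    ((Ext.mk₀ (quotientProj hn)).comp e (zero_add _)) (by
      refine (Ext.mk₀_comp_mk₀_assoc _ _ _).trans ?_
      refine Eq.trans ?_ (hs (I ^ n) (le_sup_left.trans hn)
        (Ideal.pow_le_pow_right (le_max_left _ _)))
      congr 2
      exact quotientProj_comp _ _) (n₀ := i + 1) (by lia)
  -- By Artin-Rees, `f` vanishes on `R ⧸ (I ^ m : y)` for large `m`.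
  obtain ⟨s', hs'⟩ := exists_forall_restriction_eq_zero h₁
    (K := Submodule.comap (LinearMap.mulLeft R y) (I ^ n)) (t := n)
    (fun a ha ↦ Ideal.mul_mem_left _ _ ha) f
  obtain ⟨k, hk⟩ := exists_comap_mulLeft_pow_le I (pow_ne_zero t hx : y ≠ 0) s'
  let m := max k n
  have hmn : I ^ m ≤ I ^ n := Ideal.pow_le_pow_right (le_max_right _ _)
  have hzero : (Ext.mk₀ (quotientProj ((sup_le_sup_right hmn _).trans hn))).comp e
      (zero_add _) = 0 := by
    rw [← quotientProj_comp (sup_le_sup_right hmn _) hn, ← Ext.mk₀_comp_mk₀_assoc, ← hf]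
    have hnat := ShortComplex.ShortExact.extClass_naturality
      (colonShortComplex_shortExact (I ^ m) y) (colonShortComplex_shortExact (I ^ n) y)
      (colonShortComplexMap hmn y)
    refine (Ext.comp_assoc _ _ _ (zero_add 1) (by lia) (by lia)).symm.trans ?_
    refine (congrArg (fun z ↦ Ext.comp z f _) hnat.symm).trans ?_
    refine (Ext.comp_assoc _ _ _ (add_zero 1) (zero_add _) (by lia)).trans ?_
    refine (congrArg (fun z ↦ Ext.comp _ z _)
      (hs' _ (Submodule.comap_mono hmn) (hk m (le_max_left _ _)))).trans ?_
    exact Ext.comp_zero _ _ _ _ _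
  have hle : (I ⊔ Ideal.span {x}) ^ (m + t) ≤ I ^ m ⊔ Ideal.span {y} := by
    rw [← Ideal.span_singleton_pow]
    exact Ideal.sup_pow_add_le_pow_sup_pow
  refine ⟨m + t, by lia, ?_⟩
  rw [← quotientProj_comp hle ((sup_le_sup_right hmn _).trans hn), ← Ext.mk₀_comp_mk₀_assoc,
    hzero, Ext.comp_zero]

theorem subsingleton_localCohomology_sup_span [IsDomain R] [IsNoetherianRing R]
    {I : Ideal R} {M : ModuleCat.{u} R} {c : ℕ}
    (h : ∀ i > c, Subsingleton ((localCohomology I i).obj M)) (s : Finset R) :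
    ∀ i > c + s.card, Subsingleton ((localCohomology (I ⊔ Ideal.span s) i).obj M) := by
  classical
  induction s using Finset.induction_on with
  | empty => simpa using h
  | insert x s hx ih =>
    intro i hi
    rw [Finset.card_insert_of_notMem hx] at hi
    obtain ⟨j, rfl⟩ : ∃ j, i = j + 2 := ⟨i - 2, by lia⟩
    have := subsingleton_localCohomology_sup_span_singleton x (ih (j + 1) (by lia))
      (ih (j + 2) (by lia))
    rwa [sup_assoc, sup_comm (Ideal.span (s : Set R)), ← Ideal.span_insert,
      ← Finset.coe_insert] at this

theorem exists_finset_radical_sup_span_eq [IsLocalRing R] [IsNoetherianRing R] (p : Ideal R)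
    [p.IsPrime] :
    ∃ s : Finset R, (s.card : WithBot ℕ∞) ≤ ringKrullDim (R ⧸ p) ∧
      (p ⊔ Ideal.span s).radical = IsLocalRing.maximalIdeal R := by
  classical
  have : IsLocalRing (R ⧸ p) :=
    .of_surjective' (Ideal.Quotient.mk p) Ideal.Quotient.mk_surjective
  obtain ⟨s, hs, hcard⟩ := Ideal.exists_finset_card_eq_height_of_isNoetherianRing
    (IsLocalRing.maximalIdeal (R ⧸ p))
  let r : R ⧸ p → R := Function.surjInv Ideal.Quotient.mk_surjective
  have hr (a : R ⧸ p) : Ideal.Quotient.mk p (r a) = a := Function.surjInv_eq _ a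
  refine ⟨s.image r, ?_, ?_⟩
  · rw [← IsLocalRing.maximalIdeal_height_eq_ringKrullDim, ← hcard]
    exact_mod_cast Finset.card_image_le
  have hmap : (Ideal.span ((s.image r : Finset R) : Set R)).map (Ideal.Quotient.mk p) =
      Ideal.span (s : Set (R ⧸ p)) := by
    rw [Ideal.map_span, Finset.coe_image, Set.image_image]
    simp [hr]
  have hcomap : p ⊔ Ideal.span ((s.image r : Finset R) : Set R) =
      (Ideal.span (s : Set (R ⧸ p))).comap (Ideal.Quotient.mk p) := by
    rw [← hmap, Ideal.comap_map_of_surjective _ Ideal.Quotient.mk_surjective, sup_comm,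
      ← RingHom.ker_eq_comap_bot, Ideal.mk_ker]
  have hrad : (Ideal.span (s : Set (R ⧸ p))).radical = IsLocalRing.maximalIdeal (R ⧸ p) := by
    refine le_antisymm ((IsLocalRing.maximalIdeal.isMaximal _).isPrime.radical_le_iff.2 hs.1.2) ?_
    rw [Ideal.radical_eq_sInf]
    exact le_sInf fun q hq ↦ hs.2 ⟨hq.2, hq.1⟩ (IsLocalRing.le_maximalIdeal hq.2.ne_top)
  rw [hcomap, ← Ideal.comap_radical, hrad]
  exact IsLocalRing.eq_maximalIdeal
    (Ideal.comap_isMaximal_of_surjective _ Ideal.Quotient.mk_surjective)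

end

section

variable {R : Type u} [CommRing R]

theorem cohomologicalDimension_le_iff {I : Ideal R} {M : ModuleCat.{u} R} {c : ℕ} :
    cohomologicalDimension I M ≤ c ↔
      ∀ i > c, Subsingleton ((localCohomology I i).obj M) := by
  rw [cohomologicalDimension, sSup_le_iff]
  constructor
  · intro h i hi
    by_contra hs
    rw [not_subsingleton_iff_nontrivial] at hs
    have := h i ⟨i, rfl, hs⟩
    norm_cast at this
    lia
  · rintro h _ ⟨i, rfl, hi⟩
    by_contra! hc
    exact not_subsingleton_iff_nontrivial.2 hi (h i (by exact_mod_cast hc))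

theorem cohomologicalDimension_congr_radical [IsNoetherianRing R] {I J : Ideal R}
    (h : I.radical = J.radical) (M : ModuleCat.{u} R) :
    cohomologicalDimension I M = cohomologicalDimension J M := by
  have (i : ℕ) : Nontrivial ((localCohomology I i).obj M) ↔
      Nontrivial ((localCohomology J i).obj M) :=
    ((localCohomology.isoOfSameRadical h i).app M).toLinearEquiv.toEquiv.nontrivial_congr
  simp only [cohomologicalDimension, this]

theorem idealHeight_asIdeal (p : PrimeSpectrum R) : idealHeight p.asIdeal = Order.height p :=
  le_antisymm (iInf₂_le p le_rfl) (le_iInf₂ fun _ hq ↦ Order.height_mono hq)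

theorem krullDim_quotient_eq_coheight (p : PrimeSpectrum R) :
    Order.krullDim (PrimeSpectrum (R ⧸ p.asIdeal)) = Order.coheight p := by
  rw [Order.coheight_eq_krullDim_Ici]
  exact ringKrullDim_quotient p.asIdeal

theorem height_closedPoint [IsLocalRing R] :
    (Order.height (IsLocalRing.closedPoint R) : WithBot ℕ∞) = ringKrullDim R :=
  Order.height_top_eq_krullDim

theorem cohomologicalDimension_maximalIdeal_le [IsDomain R] [IsLocalRing R] [IsNoetherianRing R]
    (p : Ideal R) [p.IsPrime] (M : ModuleCat.{u} R) :
    (cohomologicalDimension (IsLocalRing.maximalIdeal R) M : WithBot ℕ∞) ≤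
      cohomologicalDimension p M + ringKrullDim (R ⧸ p) := by
  obtain ⟨s, hs, hrad⟩ := exists_finset_radical_sup_span_eq p
  refine le_trans ?_ (add_le_add_right hs _)
  norm_cast
  rcases eq_or_ne (cohomologicalDimension p M) ⊤ with h | h
  · simp [h]
  obtain ⟨c, hc⟩ := ENat.ne_top_iff_exists.1 h
  rw [← hc, cohomologicalDimension_congr_radical (J := p ⊔ Ideal.span s)]
  · norm_cast
    exact cohomologicalDimension_le_iff.2 (subsingleton_localCohomology_sup_span
      (cohomologicalDimension_le_iff.1 hc.ge) s)
  · rw [hrad, (IsLocalRing.maximalIdeal.isMaximal R).isPrime.radical]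

end

/-- in a non-catenary Noetherian local domain there is a prime ideal `p`
with `cd(p) ≠ ht(p)`; in particular `p` is not a set-theoretic complete intersection. -/
theorem exists_prime_cd_ne_height_of_not_catenary
    (R : Type u) [CommRing R] [IsDomain R] [IsNoetherianRing R] [IsLocalRing R] (n : ℕ)
    (hn : ringKrullDim R = (n : WithBot ℕ∞))
    (hnc : ¬ ∀ p : Ideal R, p.IsPrime →
      (idealHeight p : WithBot ℕ∞) + Order.krullDim (PrimeSpectrum (R ⧸ p)) =
        Order.krullDim (PrimeSpectrum R)) :
    ∃ p : Ideal R, p.IsPrime ∧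
      cohomologicalDimension p (ModuleCat.of R R) ≠ idealHeight p := by
  by_contra! hcd
  refine hnc fun p hp ↦ le_antisymm ?_ ?_
  · rw [idealHeight_asIdeal ⟨p, hp⟩, krullDim_quotient_eq_coheight ⟨p, hp⟩]
    rw [Order.krullDim_eq_iSup_height_add_coheight_of_nonempty]
    exact_mod_cast le_iSup (fun q : PrimeSpectrum R ↦ Order.height q + Order.coheight q) ⟨p, hp⟩
  · have h := cohomologicalDimension_maximalIdeal_le p (ModuleCat.of R R)
    rw [hcd p hp, hcd _ (IsLocalRing.maximalIdeal.isMaximal R).isPrime] at h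
    refine le_trans (le_of_eq ?_) h
    exact height_closedPoint.symm.trans
      (congrArg _ (idealHeight_asIdeal (IsLocalRing.closedPoint R)).symm)
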